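/- arXiv:1509.02106 — 2 statements merged into one kernel-verified Lean document; each statement's English description precedes it below -/
import Mathlib

section
/- Let f ∈ ℂ[x,y,z,w] be a reduced homogeneous polynomial of degree d defining a surface D: f = 0 in P³, tame with respect to the pair ρ1, ρ2 of degrees e1 ≤ e2, and set e3 = d − 1 − e1 − e2 with e3 ≥ e2. Then every homogeneous syzygy ρ ∈ AR(f) of degree k < e3 belongs to S·ρ1 + S·ρ2; consequently, for every k with 0 ≤ k < e3 one has ar(f)_k = binom(k−e1+3,3) + binom(k−e2+3,3), where binom(m,3) = 0 for m < 3. -/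
open MvPolynomial Matrix

noncomputable section

/-- The polynomial ring `S = ℂ[x,y,z,w]`. -/
abbrev S4 : Type := MvPolynomial (Fin 4) ℂ

/-- The `S`-linear map sending `ρ = (α,β,γ,δ)` to `α fₓ + β f_y + γ f_z + δ f_w`. -/
def jacPair (f : S4) : (Fin 4 → S4) →ₗ[S4] S4 where
  toFun ρ := ∑ i, ρ i * pderiv i f
  map_add' a b := by simp [add_mul, Finset.sum_add_distrib]
  map_smul' c a := by simp [Finset.mul_sum, mul_assoc]

/-- `AR(f)`: the `S`-module of all Jacobian syzygies of `f`. -/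
def AR4 (f : S4) : Submodule S4 (Fin 4 → S4) := LinearMap.ker (jacPair f)

/-- A vector of polynomials is homogeneous of degree `q` if each component is. -/
def VecHomog (ρ : Fin 4 → S4) (q : ℕ) : Prop := ∀ i, (ρ i).IsHomogeneous q

/-- `AR(f)_k`, the degree-`k` homogeneous part of `AR(f)`, as a `ℂ`-subspace. -/
def ARgr (f : S4) (k : ℕ) : Submodule ℂ (Fin 4 → S4) :=
  (AR4 f).restrictScalars ℂ ⊓ Submodule.pi Set.univ (fun _ => homogeneousSubmodule (Fin 4) ℂ k)

/-- `ar(f)_k = dim_ℂ AR(f)_k`. -/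
def arDim (f : S4) (k : ℕ) : ℕ := Module.finrank ℂ (ARgr f k)

/-- `ar(f)_q` for an integer index, with the convention that it vanishes for `q < 0`. -/
def arZ (f : S4) (q : ℤ) : ℕ := if 0 ≤ q then arDim f q.toNat else 0

/-- The Jacobian ideal of `f`. -/
def JacIdeal (f : S4) : Ideal S4 := Ideal.span (Set.range fun i : Fin 4 => pderiv i f)

/-- `m(f)_k = dim_ℂ M(f)_k`, the dimension of the degree-`k` part of the Milnor algebra. -/
def milnor4 (f : S4) (k : ℕ) : ℕ :=
  Module.finrank ℂ ((homogeneousSubmodule (Fin 4) ℂ k).map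
    (Submodule.mkQ ((JacIdeal f).restrictScalars ℂ)))

/-- `binom(m,3)` with the convention that it is `0` for `m < 3`. -/
def binom3 (m : ℤ) : ℕ := m.toNat.choose 3

/-- All four `3×3` minors of the `3×4` matrix with rows `ρ1, ρ2, ρ` vanish. -/
def MinorsVanish3 (ρ1 ρ2 ρ : Fin 4 → S4) : Prop :=
  ∀ j : Fin 4,
    (Matrix.of fun i k => ![ρ1, ρ2, ρ] i (j.succAbove k) : Matrix (Fin 3) (Fin 3) S4).det = 0

/-- `D : f = 0` is tame with respect to `ρ1, ρ2`: every homogeneous syzygy `ρ` for which all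
`3×3` minors of the matrix with rows `ρ1, ρ2, ρ` vanish lies in `S·ρ1 + S·ρ2`. -/
def TamePair (f : S4) (ρ1 ρ2 : Fin 4 → S4) : Prop :=
  ∀ ρ ∈ AR4 f, ∀ q : ℕ, VecHomog ρ q → MinorsVanish3 ρ1 ρ2 ρ →
    ∃ a b : S4, ρ = a • ρ1 + b • ρ2

/-- `ρ1` is a nonzero homogeneous syzygy of minimal degree `e1`, and `ρ2` is a homogeneous
syzygy of minimal degree `e2 ≥ e1` among the homogeneous syzygies not in `S·ρ1`. -/
def MinimalPair (f : S4) (ρ1 ρ2 : Fin 4 → S4) (e1 e2 : ℕ) : Prop :=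
  ρ1 ∈ AR4 f ∧ ρ1 ≠ 0 ∧ VecHomog ρ1 e1 ∧
  (∀ ρ ∈ AR4 f, ∀ q : ℕ, ρ ≠ 0 → VecHomog ρ q → e1 ≤ q) ∧
  ρ2 ∈ AR4 f ∧ VecHomog ρ2 e2 ∧ e1 ≤ e2 ∧ (∀ a : S4, ρ2 ≠ a • ρ1) ∧
  (∀ ρ ∈ AR4 f, ∀ q : ℕ, VecHomog ρ q → (∀ a : S4, ρ ≠ a • ρ1) → e2 ≤ q)

/-- `D : f = 0` is a free surface with exponents `d1 ≤ d2 ≤ d3`: `AR(f)` is a free graded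
`S`-module with a homogeneous basis of degrees `d1, d2, d3`. -/
def IsFreeWith (f : S4) (d1 d2 d3 : ℕ) : Prop :=
  d1 ≤ d2 ∧ d2 ≤ d3 ∧
  ∃ ρ1 ρ2 ρ3 : Fin 4 → S4,
    ρ1 ∈ AR4 f ∧ ρ2 ∈ AR4 f ∧ ρ3 ∈ AR4 f ∧
    VecHomog ρ1 d1 ∧ VecHomog ρ2 d2 ∧ VecHomog ρ3 d3 ∧
    (∀ ρ ∈ AR4 f, ∃ a b c : S4, ρ = a • ρ1 + b • ρ2 + c • ρ3) ∧
    (∀ a b c : S4, a • ρ1 + b • ρ2 + c • ρ3 = 0 → a = 0 ∧ b = 0 ∧ c = 0)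

/-- `D : f = 0` is a nearly free surface with exponents `d1 ≤ d2 ≤ d3` (`d4 = d3`):
`AR(f)` is generated by four homogeneous syzygies of degrees `d1, d2, d3, d3`,
with `d3 = d - (d1 + d2)`, whose module of relations is generated by a single relation
`a₁ρ₁ + a₂ρ₂ + a₃ρ₃ + a₄ρ₄ = 0` with `a₁, a₂, a₃, a₄` homogeneous of degrees
`d3-d1+1, d3-d2+1, 1, 1`. -/
def IsNearlyFreeWith (f : S4) (d d1 d2 d3 : ℕ) : Prop :=
  d1 ≤ d2 ∧ d2 ≤ d3 ∧ d1 + d2 + d3 = d ∧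
  ∃ (ρ : Fin 4 → Fin 4 → S4) (a : Fin 4 → S4),
    (∀ i, ρ i ∈ AR4 f) ∧
    VecHomog (ρ 0) d1 ∧ VecHomog (ρ 1) d2 ∧ VecHomog (ρ 2) d3 ∧ VecHomog (ρ 3) d3 ∧
    (∀ σ ∈ AR4 f, ∃ b : Fin 4 → S4, σ = ∑ i, b i • ρ i) ∧
    (a 0).IsHomogeneous (d3 - d1 + 1) ∧ (a 1).IsHomogeneous (d3 - d2 + 1) ∧
    (a 2).IsHomogeneous 1 ∧ (a 3).IsHomogeneous 1 ∧
    a ≠ 0 ∧ (∑ i, a i • ρ i) = 0 ∧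
    (∀ b : Fin 4 → S4, (∑ i, b i • ρ i) = 0 → ∃ c : S4, b = c • a)

/-- `D : f = 0` is tame: it is tame with respect to some pair `ρ1, ρ2` chosen as in the paper. -/
def IsTame (f : S4) : Prop :=
  ∃ (ρ1 ρ2 : Fin 4 → S4) (e1 e2 : ℕ), MinimalPair f ρ1 ρ2 e1 e2 ∧ TamePair f ρ1 ρ2

/-- The `4×4` matrix with rows the Euler vector field `(x,y,z,w)` and `ρ1, ρ2, ρ`. -/
def EMat (ρ1 ρ2 ρ : Fin 4 → S4) : Matrix (Fin 4) (Fin 4) S4 :=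
  Matrix.of ![fun i => X i, ρ1, ρ2, ρ]


section helpers

theorem tdeg_pderiv_lt (p : S4) (i : Fin 4) (h : pderiv i p ≠ 0) :
    (pderiv i p).totalDegree < p.totalDegree := by
  obtain ⟨n, hn, hn'⟩ := (pderiv i p).support.exists_mem_eq_sup
    (Finset.nonempty_iff_ne_empty.mpr fun h' => h (support_eq_empty.mp h')) (fun s => s.sum fun _ e => e)
  have h1 : (pderiv i p).totalDegree = n.sum fun _ e => e := hn'
  have hc : coeff (n + Finsupp.single i 1) p ≠ 0 := by
    intro h0
    rw [mem_support_iff, coeff_pderiv, h0, zero_mul] at hn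
    exact hn rfl
  have h2 := le_totalDegree (mem_support_iff.mpr hc)
  rw [Finsupp.sum_add_index' (by simp) (by simp), Finsupp.sum_single_index rfl] at h2
  omega

theorem isUnit_of_dvd_pderiv (p : S4) (hp : p ≠ 0) (h : ∀ i, p ∣ pderiv i p) : IsUnit p := by
  have hz : ∀ i, pderiv i p = 0 := by
    intro i
    by_contra h0
    have h1 := tdeg_pderiv_lt p i h0
    have h2 := totalDegree_le_of_dvd_of_isDomain (h i) h0
    omega
  have : p.totalDegree = 0 := by
    rw [totalDegree_eq_zero_iff]
    intro m hm i
    by_contra hi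
    have h1 := coeff_pderiv (i := i) p (m - Finsupp.single i 1)
    rw [hz i, coeff_zero, Finsupp.sub_add_single_one_cancel hi] at h1
    rw [mem_support_iff] at hm
    rcases mul_eq_zero.mp h1.symm with h2 | h2
    · exact hm h2
    · norm_cast at h2
  rw [totalDegree_eq_zero_iff_eq_C] at this
  rw [this] at hp ⊢
  refine IsUnit.map C (IsUnit.mk0 _ ?_)
  intro h0
  simp [h0] at hp

theorem dvd_of_dvd_mul_pderiv (f D : S4) (hf0 : f ≠ 0) (hred : Squarefree f)
    (h : ∀ j, f ∣ D * pderiv j f) : f ∣ D := by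
  obtain ⟨h', D', g, hrel, hf, hD⟩ := UniqueFactorizationMonoid.exists_reduced_factors f hf0 D
  have hg : g ≠ 0 := by rintro rfl; simp at hf; exact hf0 hf.symm
  have hh0 : h' ≠ 0 := by rintro rfl; simp at hf; exact hf0 hf.symm
  have hj : ∀ j, h' ∣ pderiv j f := by
    intro j
    apply hrel.dvd_of_dvd_mul_left
    have := h j
    nth_rewrite 1 [← hf] at this
    rw [← hD, mul_assoc] at this
    exact (mul_dvd_mul_iff_left hg).mp this
  by_cases hu : IsUnit h'
  · rw [← hf, ← hD]
    exact mul_dvd_mul_left g hu.dvd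
  exfalso
  obtain ⟨p, hp, hph⟩ := WfDvdMonoid.exists_irreducible_factor hu hh0
  have hpp : Prime p := hp.prime
  obtain ⟨q, hq⟩ : p ∣ f := hph.trans ⟨g, by rw [← hf, mul_comm]⟩
  have hpq : ¬ p ∣ q := by
    rintro ⟨r, rfl⟩
    exact hp.not_isUnit (hred p ⟨r, by rw [hq]; ring⟩)
  refine hp.not_isUnit (isUnit_of_dvd_pderiv p hp.ne_zero fun i => ?_)
  have h1 := hph.trans (hj i)
  rw [hq, pderiv_mul] at h1
  have h2 : p ∣ pderiv i p * q := (dvd_add_left (Dvd.intro _ rfl)).mp h1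
  exact (hpp.dvd_or_dvd h2).resolve_right hpq

theorem hc_mul (a h : S4) (e k : ℕ) (hh : h.IsHomogeneous e) :
    homogeneousComponent k (a * h) = if e ≤ k then homogeneousComponent (k - e) a * h else 0 := by
  induction a using MvPolynomial.induction_on' with
  | monomial u c =>
    have h1 : (monomial u c : S4).IsHomogeneous u.degree := isHomogeneous_monomial c rfl
    rw [homogeneousComponent_of_mem (h1.mul hh), homogeneousComponent_of_mem h1]
    split_ifs <;> first | rfl | omega
  | add p q hp hq =>
    rw [add_mul, map_add, hp, hq]
    split_ifs
    · rw [map_add, add_mul]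
    · simp

/-- The homogeneous part of degree `k` of `a • ρ`. -/
theorem vec_hc_mem (f : S4) (d : ℕ) (hf : f.IsHomogeneous d) (σ : Fin 4 → S4) (hσ : σ ∈ AR4 f)
    (q : ℕ) : (fun i => homogeneousComponent q (σ i)) ∈ AR4 f := by
  have h0 : ∑ i, σ i * pderiv i f = 0 := hσ
  change ∑ i, homogeneousComponent q (σ i) * pderiv i f = 0
  have h1 := congrArg (homogeneousComponent (q + (d - 1))) h0
  rw [map_sum, map_zero] at h1
  rw [← h1]
  refine Finset.sum_congr rfl fun i _ => ?_
  rw [hc_mul _ _ (d - 1) _ hf.pderiv, if_pos (Nat.le_add_left _ _), Nat.add_sub_cancel]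

theorem minpair_indep (f : S4) (d e1 e2 : ℕ) (ρ1 ρ2 : Fin 4 → S4) (hf : f.IsHomogeneous d)
    (hmin : MinimalPair f ρ1 ρ2 e1 e2) (a b : S4) (hab : a • ρ1 + b • ρ2 = 0) :
    a = 0 ∧ b = 0 := by
  obtain ⟨h1, h10, h1h, h1m, h2, h2h, h12, h2n, h2m⟩ := hmin
  obtain ⟨i0, hi0⟩ : ∃ i, ρ1 i ≠ 0 := Function.ne_iff.mp h10
  have hb : b = 0 := by
    by_contra hb
    obtain ⟨b', a', c, hrel, rfl, rfl⟩ := UniqueFactorizationMonoid.exists_reduced_factors b hb a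
    have hc : c ≠ 0 := left_ne_zero_of_mul hb
    have hb' : b' ≠ 0 := right_ne_zero_of_mul hb
    have hi : ∀ i, a' * ρ1 i + b' * ρ2 i = 0 := by
      intro i
      have := congrFun hab i
      simp only [Pi.add_apply, Pi.smul_apply, smul_eq_mul, Pi.zero_apply] at this
      apply mul_left_cancel₀ hc
      rw [mul_zero, ← this]; ring
    have hdv : ∀ i, b' ∣ ρ1 i := fun i => by
      apply hrel.dvd_of_dvd_mul_left
      exact ⟨-ρ2 i, by linear_combination hi i⟩
    choose σ hσ using hdv
    have hσm : σ ∈ AR4 f := by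
      have h0 : ∑ i, ρ1 i * pderiv i f = 0 := h1
      change ∑ i, σ i * pderiv i f = 0
      apply mul_left_cancel₀ hb'
      rw [mul_zero, ← h0, Finset.mul_sum]
      refine Finset.sum_congr rfl fun i _ => ?_
      rw [hσ i]; ring
    have hσ0 : σ i0 ≠ 0 := fun h => hi0 (by rw [hσ, h, mul_zero])
    have hdeg : b'.totalDegree + (σ i0).totalDegree = e1 := by
      rw [← totalDegree_mul_of_isDomain hb' hσ0, ← hσ]
      exact (h1h i0).totalDegree hi0
    have hle := h1m _ (vec_hc_mem f d hf σ hσm (σ i0).totalDegree) (σ i0).totalDegree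
      (fun h => by
        have h3 := congrFun h i0
        obtain ⟨n, hn, hn'⟩ := (σ i0).support.exists_mem_eq_sup
          (Finset.nonempty_iff_ne_empty.mpr fun h' => hσ0 (support_eq_empty.mp h')) (fun s => s.sum fun _ e => e)
        have h4 : (σ i0).totalDegree = n.degree := hn'
        have h5 := congrArg (coeff n) h3
        rw [coeff_homogeneousComponent, if_pos h4.symm] at h5
        exact (mem_support_iff.mp hn) (by simpa using h5))
      (fun i => homogeneousComponent_isHomogeneous _ _)
    have hb0 : b'.totalDegree = 0 := by omega
    rw [totalDegree_eq_zero_iff_eq_C] at hb0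
    obtain ⟨u, hu⟩ : ∃ u, b' * u = 1 := by
      rw [hb0] at hb' ⊢
      refine ⟨C (coeff 0 b')⁻¹, ?_⟩
      rw [← C_mul, mul_inv_cancel₀, C_1]
      intro h; rw [h, C_0] at hb'; exact hb' rfl
    refine h2n (-(u * a')) (funext fun i => ?_)
    simp only [Pi.smul_apply, smul_eq_mul]
    linear_combination u * hi i - ρ2 i * hu
  refine ⟨?_, hb⟩
  have := congrFun hab i0
  simp only [hb, Pi.add_apply, Pi.smul_apply, smul_eq_mul, Pi.zero_apply, zero_mul,
    add_zero] at this
  exact (mul_eq_zero.mp this).resolve_right hi0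

/-- The degree `k - e` part of `S`, zero for `k < e`. -/
def shiftPart (k e : ℕ) : Submodule ℂ S4 :=
  if e ≤ k then homogeneousSubmodule (Fin 4) ℂ (k - e) else ⊥

theorem finrank_homog (n : ℕ) :
    Module.finrank ℂ (homogeneousSubmodule (Fin 4) ℂ n) = (n + 3).choose 3 := by
  rw [homogeneousSubmodule_eq_finsupp_supported]
  have h1 := Module.finrank_eq_nat_card_basis
    (basisRestrictSupport (σ := Fin 4) ℂ {d : Fin 4 →₀ ℕ | d.degree = n})
  refine h1.trans ?_
  have h2 : {d : Fin 4 →₀ ℕ | d.degree = n} =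
      ((Finset.univ : Finset (Fin 4)).finsuppAntidiag n : Set (Fin 4 →₀ ℕ)) := by
    ext m
    simp [Finsupp.degree_eq_sum]
  rw [h2, Nat.card_coe_set_eq, Set.ncard_coe_finset, Finset.card_finsuppAntidiag_nat_eq_choose]
  simp only [Finset.card_univ, Fintype.card_fin]
  rw [show 4 + n - 1 = n + 3 by omega]
  exact Nat.choose_symm_add

theorem finrank_shift (k e : ℕ) :
    Module.finrank ℂ (shiftPart k e) = binom3 ((k : ℤ) - e + 3) := by
  unfold shiftPart binom3
  by_cases h : e ≤ k
  · rw [if_pos h, finrank_homog]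
    congr 1
    omega
  · rw [if_neg h, finrank_bot, Nat.choose_eq_zero_of_lt]
    omega

instance (k e : ℕ) : Module.Finite ℂ (shiftPart k e) := by
  unfold shiftPart
  by_cases h : e ≤ k
  · rw [if_pos h]; exact Module.Finite.iff_fg.mpr (homogeneousSubmodule_fg _ _ _)
  · rw [if_neg h]; infer_instance

theorem shift_mul (k e : ℕ) (a h : S4) (ha : a ∈ shiftPart k e) (hh : h.IsHomogeneous e) :
    (a * h).IsHomogeneous k := by
  unfold shiftPart at ha
  split_ifs at ha with hk
  · have := IsHomogeneous.mul ha hh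
    rwa [Nat.sub_add_cancel hk] at this
  · rw [(Submodule.mem_bot ℂ).mp ha, zero_mul]
    exact isHomogeneous_zero _ _ _

/-- Combination map. -/
def combMap (ρ1 ρ2 : Fin 4 → S4) (k e1 e2 : ℕ) :
    (shiftPart k e1 × shiftPart k e2) →ₗ[ℂ] (Fin 4 → S4) where
  toFun p := (p.1 : S4) • ρ1 + (p.2 : S4) • ρ2
  map_add' p q := by
    simp only [Prod.fst_add, Prod.snd_add, Submodule.coe_add, add_smul]; abel
  map_smul' c p := by
    simp only [Prod.smul_fst, Prod.smul_snd, Submodule.coe_smul, smul_assoc, smul_add,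
      RingHom.id_apply]

/-- Truncation of a coefficient to its degree `k - e` part. -/
def truncPart (k e : ℕ) (a : S4) : S4 :=
  if e ≤ k then homogeneousComponent (k - e) a else 0

theorem truncPart_mem (k e : ℕ) (a : S4) : truncPart k e a ∈ shiftPart k e := by
  unfold truncPart shiftPart
  split_ifs
  · exact homogeneousComponent_mem _ _
  · simp

theorem hc_mul' (a h : S4) (e k : ℕ) (hh : h.IsHomogeneous e) :
    homogeneousComponent k (a * h) = truncPart k e a * h := by
  rw [hc_mul a h e k hh, truncPart]
  split_ifs <;> simp

theorem low_span (f : S4) (d e1 e2 e3 : ℕ) (ρ1 ρ2 : Fin 4 → S4)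
    (hd : 1 ≤ d) (hf : f.IsHomogeneous d) (hred : Squarefree f)
    (hmin : MinimalPair f ρ1 ρ2 e1 e2) (htame : TamePair f ρ1 ρ2)
    (he3 : e1 + e2 + e3 + 1 = d) (ρ : Fin 4 → S4) (hρ : ρ ∈ AR4 f) (k : ℕ) (hk : k < e3)
    (hρk : VecHomog ρ k) : ∃ a b : S4, ρ = a • ρ1 + b • ρ2 := by
  refine htame ρ hρ k hρk ?_
  obtain ⟨h1, h10, h1h, -, h2, h2h, -, -, -⟩ := hmin
  have hf0 : f ≠ 0 := hred.ne_zero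
  have s0 : ∑ i, ρ i * pderiv i f = 0 := hρ
  have s1 : ∑ i, ρ1 i * pderiv i f = 0 := h1
  have s2 : ∑ i, ρ2 i * pderiv i f = 0 := h2
  have s3 := hf.sum_X_mul_pderiv
  set M := EMat ρ1 ρ2 ρ with hM
  have hMv : M *ᵥ (fun i => pderiv i f) = Pi.single 0 ((d : S4) * f) := by
    funext i
    fin_cases i
    · simpa [hM, EMat, Matrix.mulVec, dotProduct] using s3
    · simpa [hM, EMat, Matrix.mulVec, dotProduct] using s1
    · simpa [hM, EMat, Matrix.mulVec, dotProduct] using s2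
    · simpa [hM, EMat, Matrix.mulVec, dotProduct] using s0
  have hadj : ∀ j, M.det * pderiv j f = M.adjugate j 0 * ((d : S4) * f) := by
    intro j
    have := congrFun (congrArg (fun v => M.adjugate *ᵥ v) hMv) j
    simp only [Matrix.mulVec_mulVec, Matrix.adjugate_mul, Matrix.smul_mulVec, Matrix.one_mulVec,
      Matrix.mulVec_single] at this
    simpa using this
  have hdvd : f ∣ M.det := by
    refine dvd_of_dvd_mul_pderiv f _ hf0 hred fun j => ?_
    rw [hadj j]
    exact ⟨M.adjugate j 0 * d, by ring⟩
  have hdeg : M.det.IsHomogeneous (1 + e1 + e2 + k) := by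
    rw [Matrix.det_apply]
    refine IsHomogeneous.sum _ _ _ fun τ _ => ?_
    have hp : (∏ i, M (τ i) i).IsHomogeneous (∑ i, ![1, e1, e2, k] (τ i)) := by
      refine IsHomogeneous.prod _ _ _ fun i _ => ?_
      generalize τ i = r
      fin_cases r
      · exact isHomogeneous_X _ _
      · exact h1h i
      · exact h2h i
      · exact hρk i
    rw [Equiv.sum_comp τ, Fin.sum_univ_four] at hp
    have hp' : (∏ i, M (τ i) i).IsHomogeneous (1 + e1 + e2 + k) := hp
    rcases Int.units_eq_one_or (Equiv.Perm.sign τ) with h | h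
    · rw [h, one_smul]; exact hp'
    · rw [h, Units.neg_smul, one_smul]; exact hp'.neg
  have hdet : M.det = 0 := by
    by_contra h0
    have h3 := totalDegree_le_of_dvd_of_isDomain hdvd h0
    rw [hf.totalDegree hf0, hdeg.totalDegree h0] at h3
    omega
  intro j
  have h3 := hadj j
  rw [hdet, zero_mul] at h3
  have hdC : (d : S4) ≠ 0 := by
    rw [Nat.cast_ne_zero]; omega
  have h4 : M.adjugate j 0 = 0 :=
    (mul_eq_zero.mp h3.symm).resolve_right (mul_ne_zero hdC hf0)
  rw [Matrix.adjugate_fin_succ_eq_det_submatrix] at h4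
  have h5 := (mul_eq_zero.mp h4).resolve_left (pow_ne_zero _ (by simp))
  rw [← h5]
  congr 1

end helpers

/-- Every homogeneous syzygy of degree `k < e3` of a tame surface lies in `S·ρ1 + S·ρ2`;
consequently `ar(f)_k` is given by the expected binomial formula in that range. -/
theorem low_degree_syzygies (f : S4) (d e1 e2 e3 : ℕ) (ρ1 ρ2 : Fin 4 → S4)
    (hd : 1 ≤ d) (hf : f.IsHomogeneous d) (hred : Squarefree f)
    (hmin : MinimalPair f ρ1 ρ2 e1 e2) (htame : TamePair f ρ1 ρ2)
    (he3 : e1 + e2 + e3 + 1 = d) (he23 : e2 ≤ e3) :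
    (∀ ρ ∈ AR4 f, ∀ k : ℕ, k < e3 → VecHomog ρ k → ∃ a b : S4, ρ = a • ρ1 + b • ρ2) ∧
    (∀ k : ℕ, k < e3 →
      arDim f k = binom3 ((k : ℤ) - e1 + 3) + binom3 ((k : ℤ) - e2 + 3)) := by
  have hspan := low_span f d e1 e2 e3 ρ1 ρ2 hd hf hred hmin htame he3
  refine ⟨fun ρ hρ k hk hh => hspan ρ hρ k hk hh, fun k hk => ?_⟩
  have hinj : Function.Injective (combMap ρ1 ρ2 k e1 e2) := by
    rw [← LinearMap.ker_eq_bot, LinearMap.ker_eq_bot']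
    rintro ⟨a, b⟩ h
    obtain ⟨ha, hb⟩ := minpair_indep f d e1 e2 ρ1 ρ2 hf hmin a b h
    exact Prod.ext (Subtype.ext ha) (Subtype.ext hb)
  obtain ⟨h1, -, h1h, -, h2, h2h, -⟩ := hmin
  have hrange : LinearMap.range (combMap ρ1 ρ2 k e1 e2) = ARgr f k := by
    ext ρ
    constructor
    · rintro ⟨⟨a, b⟩, rfl⟩
      refine ⟨(AR4 f).add_mem ((AR4 f).smul_mem _ h1) ((AR4 f).smul_mem _ h2), ?_⟩
      intro i _
      exact (shift_mul k e1 a _ a.2 (h1h i)).add (shift_mul k e2 b _ b.2 (h2h i))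
    · rintro ⟨hA, hH⟩
      have hH' : VecHomog ρ k := fun i => hH i trivial
      obtain ⟨a, b, hab⟩ := hspan ρ hA k hk hH'
      refine ⟨(⟨truncPart k e1 a, truncPart_mem _ _ _⟩, ⟨truncPart k e2 b, truncPart_mem _ _ _⟩),
        funext fun i => ?_⟩
      change truncPart k e1 a * ρ1 i + truncPart k e2 b * ρ2 i = ρ i
      rw [← hc_mul' a _ e1 k (h1h i), ← hc_mul' b _ e2 k (h2h i), ← map_add]
      have h3 : a * ρ1 i + b * ρ2 i = ρ i := by rw [hab]; rfl
      rw [h3]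
      exact homogeneousComponent_eq_self (hH' i)
  rw [arDim, ← hrange, LinearMap.finrank_range_of_inj hinj, Module.finrank_prod,
    finrank_shift, finrank_shift]
end
end

section
/- Let f ∈ ℂ[x,y,z,w] be a reduced homogeneous polynomial of degree d defining a surface D: f = 0 in P³, tame with respect to the pair ρ1, ρ2 of degrees e1 ≤ e2, and set e3 = d − 1 − e1 − e2 with e3 ≥ e2. Let B(f) be the Bourbaki ideal of AR(f): the ideal of all h ∈ S such that h·f = det M(E,ρ1,ρ2,ρ) for some ρ ∈ AR(f), where M(E,ρ1,ρ2,ρ) is the 4×4 matrix with rows (x,y,z,w), ρ1, ρ2, ρ. Then D is nearly free with exponents e1, e2, e3+1 if and only if dim_ℂ B(f)_1 = 2, where B(f)_1 is the space of linear forms in B(f). -/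
open MvPolynomial Matrix

noncomputable section

lemma EMat_eq (ρ1 ρ2 ρ : Fin 4 → S4) :
    EMat ρ1 ρ2 ρ = (EMat ρ1 ρ2 0).updateRow 3 ρ := by
  ext i j
  fin_cases i <;> simp [EMat, Matrix.updateRow_apply]

/-- `ρ ↦ det M(E, ρ1, ρ2, ρ)` as an `S`-linear map. -/
def vdet (ρ1 ρ2 : Fin 4 → S4) : (Fin 4 → S4) →ₗ[S4] S4 where
  toFun ρ := (EMat ρ1 ρ2 ρ).det
  map_add' a b := by
    show (EMat ρ1 ρ2 (a + b)).det = (EMat ρ1 ρ2 a).det + (EMat ρ1 ρ2 b).det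
    rw [EMat_eq ρ1 ρ2 (a + b), EMat_eq ρ1 ρ2 a, EMat_eq ρ1 ρ2 b, Matrix.det_updateRow_add]
  map_smul' c a := by
    show (EMat ρ1 ρ2 (c • a)).det = c * (EMat ρ1 ρ2 a).det
    rw [EMat_eq ρ1 ρ2 (c • a), EMat_eq ρ1 ρ2 a]
    simp [Matrix.det_updateRow_smul]

/-- The degree-one part `B(f)₁` of the Bourbaki ideal `B(f)`: the space of linear forms `h`
such that `h·f = det M(E,ρ1,ρ2,ρ)` for some `ρ ∈ AR(f)`. -/
def Bf1 (f : S4) (ρ1 ρ2 : Fin 4 → S4) : Submodule ℂ S4 :=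
  homogeneousSubmodule (Fin 4) ℂ 1 ⊓
    Submodule.comap (LinearMap.mulRight ℂ f)
      (Submodule.restrictScalars ℂ (Submodule.map (vdet ρ1 ρ2) (AR4 f)))

lemma hc_mul_s16 (n k : ℕ) (p g : S4) (hg : g.IsHomogeneous k) :
    homogeneousComponent (n + k) (p * g) = homogeneousComponent n p * g := by
  let _ := MvPolynomial.gradedAlgebra (σ := Fin 4) (R := ℂ)
  have := DirectSum.coe_decompose_mul_add_of_right_mem (homogeneousSubmodule (Fin 4) ℂ)
    (a := p) (b := g) (i := n) (j := k) hg
  rw [← decomposition.decompose'_apply, ← decomposition.decompose'_apply]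
  exact this

lemma hc_mul_lt (n k : ℕ) (p g : S4) (hg : g.IsHomogeneous k) (h : n < k) :
    homogeneousComponent n (p * g) = 0 := by
  have hp := sum_homogeneousComponent p
  rw [← hp, Finset.sum_mul, map_sum]
  refine Finset.sum_eq_zero fun i _ => ?_
  rw [homogeneousComponent_of_mem (n := i + k)
    ((homogeneousComponent_isHomogeneous i p).mul hg), if_neg (by omega)]

/-- componentwise homogeneous component -/
def vcomp (q : ℕ) (ρ : Fin 4 → S4) : Fin 4 → S4 := fun i => homogeneousComponent q (ρ i)

lemma vcomp_homog (q : ℕ) (ρ : Fin 4 → S4) : VecHomog (vcomp q ρ) q :=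
  fun i => homogeneousComponent_isHomogeneous q (ρ i)

lemma mem_AR4 {f : S4} {ρ : Fin 4 → S4} : ρ ∈ AR4 f ↔ ∑ i, ρ i * pderiv i f = 0 := Iff.rfl

lemma vcomp_mem {f : S4} {d : ℕ} (hf : f.IsHomogeneous d) {ρ : Fin 4 → S4} (h : ρ ∈ AR4 f)
    (q : ℕ) : vcomp q ρ ∈ AR4 f := by
  rw [mem_AR4] at *
  have := congrArg (homogeneousComponent (q + (d - 1))) h
  rw [map_sum, map_zero] at this
  rw [← this]
  exact Finset.sum_congr rfl fun i _ => (hc_mul_s16 q (d-1) _ _ hf.pderiv).symm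

lemma exists_vcomp_sum (ρ : Fin 4 → S4) : ∃ N, ρ = ∑ q ∈ Finset.range N, vcomp q ρ := by
  refine ⟨(Finset.univ.sup fun i => (ρ i).totalDegree) + 1, ?_⟩
  funext i
  rw [Finset.sum_apply]
  conv_lhs => rw [← sum_homogeneousComponent (ρ i)]
  refine Finset.sum_subset ?_ ?_
  · intro x hx
    have := Finset.le_sup (f := fun i => (ρ i).totalDegree) (Finset.mem_univ i)
    simp only [Finset.mem_range] at *
    omega
  · intro x _ hx
    apply homogeneousComponent_eq_zero
    simp only [Finset.mem_range] at hx
    omega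

lemma vcomp_eq_self {q : ℕ} {ρ : Fin 4 → S4} (h : VecHomog ρ q) : vcomp q ρ = ρ :=
  funext fun i => homogeneousComponent_eq_self (h i)

lemma det_homog (M : Matrix (Fin 4) (Fin 4) S4) (k : Fin 4 → ℕ)
    (h : ∀ i j, (M i j).IsHomogeneous (k i)) : M.det.IsHomogeneous (∑ i, k i) := by
  rw [Matrix.det_apply]
  refine IsHomogeneous.sum _ _ _ fun s _ => ?_
  have h1 : (∏ i, M (s i) i).IsHomogeneous (∑ i, k (s i)) :=
    IsHomogeneous.prod _ _ _ fun i _ => h _ _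
  rw [Equiv.sum_comp s k] at h1
  rcases Int.units_eq_one_or (Equiv.Perm.sign s) with h2 | h2
  · rw [h2, one_smul]; exact h1
  · rw [h2, Units.neg_smul, one_smul]; exact h1.neg

lemma vdet_apply (ρ1 ρ2 ρ : Fin 4 → S4) : vdet ρ1 ρ2 ρ = (EMat ρ1 ρ2 ρ).det := rfl

lemma vdet_homog {ρ1 ρ2 ρ : Fin 4 → S4} {e1 e2 q : ℕ} (h1 : VecHomog ρ1 e1)
    (h2 : VecHomog ρ2 e2) (h : VecHomog ρ q) :
    (vdet ρ1 ρ2 ρ).IsHomogeneous (q + (e1 + e2 + 1)) := by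
  rw [vdet_apply]
  have := det_homog (EMat ρ1 ρ2 ρ) ![1, e1, e2, q] (by
    intro i j
    fin_cases i
    · exact isHomogeneous_X _ _
    · exact h1 j
    · exact h2 j
    · exact h j)
  convert this using 1
  simp [Fin.sum_univ_four]; ring

lemma vdet_vcomp {ρ1 ρ2 : Fin 4 → S4} {e1 e2 : ℕ} (h1 : VecHomog ρ1 e1)
    (h2 : VecHomog ρ2 e2) (ρ : Fin 4 → S4) (q : ℕ) :
    vdet ρ1 ρ2 (vcomp q ρ) = homogeneousComponent (q + (e1 + e2 + 1)) (vdet ρ1 ρ2 ρ) := by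
  have key : ∀ σ : Fin 4 → S4, vdet ρ1 ρ2 σ = ∑ i, σ i * vdet ρ1 ρ2 (Pi.single i 1) := by
    intro σ
    conv_lhs => rw [pi_eq_sum_univ' σ]
    rw [map_sum]
    refine Finset.sum_congr rfl fun i _ => ?_
    rw [map_smul, smul_eq_mul]
  rw [key ρ, key, map_sum]
  refine Finset.sum_congr rfl fun i _ => ?_
  rw [hc_mul_s16]
  · rfl
  · have := vdet_homog (q := 0) (ρ := Pi.single i 1) h1 h2 (by
      intro j
      by_cases hj : j = i
      · subst hj; simpa using isHomogeneous_one _ _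
      · rw [Pi.single_eq_of_ne hj]; exact isHomogeneous_zero _ _ _)
    simpa using this

/-- torsion-freeness -/
lemma AR4_of_smul {f : S4} {a : S4} (ha : a ≠ 0) {ρ : Fin 4 → S4} (h : a • ρ ∈ AR4 f) :
    ρ ∈ AR4 f := by
  change jacPair f _ = 0 at h
  rw [map_smul, smul_eq_mul] at h
  exact (mul_eq_zero.mp h).resolve_left ha

lemma adj_col {f : S4} {d : ℕ} (hf : f.IsHomogeneous d) {ρ1 ρ2 ρ : Fin 4 → S4}
    (h1 : ρ1 ∈ AR4 f) (h2 : ρ2 ∈ AR4 f) (h : ρ ∈ AR4 f) (j : Fin 4) :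
    vdet ρ1 ρ2 ρ * pderiv j f = (EMat ρ1 ρ2 ρ).adjugate j 0 * (d • f) := by
  have hM : (EMat ρ1 ρ2 ρ) *ᵥ (fun i => pderiv i f) = Pi.single 0 (d • f) := by
    funext i
    fin_cases i
    · exact hf.sum_X_mul_pderiv
    · exact h1
    · exact h2
    · exact h
  have := congrArg (fun v => ((EMat ρ1 ρ2 ρ).adjugate *ᵥ v) j) hM
  simp only [Matrix.mulVec_mulVec, Matrix.adjugate_mul, Matrix.mulVec_single] at this
  simpa [Matrix.smul_mulVec, vdet_apply, mul_comm] using this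

lemma unit_of_dvd_pderiv {g : S4} (hg : g ≠ 0) (h : ∀ i, g ∣ pderiv i g) : IsUnit g := by
  obtain ⟨m, hm, hmax⟩ := Finset.exists_mem_eq_sup g.support (support_nonempty.mpr hg)
    (fun m => m.degree)
  have hn : g.totalDegree = m.degree := hmax
  by_cases h0 : m = 0
  · rw [h0] at hn
    have hC := totalDegree_eq_zero_iff_eq_C.mp (hn.trans (by simp))
    rw [hC] at hg ⊢
    exact (isUnit_iff_ne_zero.mpr (by rintro h; simp [h] at hg)).map C
  · obtain ⟨i, hi⟩ := Finsupp.ne_iff.mp h0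
    have hi' : m i ≠ 0 := hi
    have hle : Finsupp.single i 1 ≤ m := by
      rw [Finsupp.single_le_iff]; omega
    have hne : pderiv i g ≠ 0 := by
      intro hz
      have := coeff_pderiv (i := i) g (m - Finsupp.single i 1)
      rw [hz, tsub_add_cancel_of_le hle, coeff_zero] at this
      have h3 := mem_support_iff.mp hm
      have h4 : (((m - Finsupp.single i 1 : Fin 4 →₀ ℕ) i : ℕ) : ℂ) + 1 ≠ 0 := by
        exact Nat.cast_add_one_ne_zero _
      exact mul_ne_zero h3 h4 this.symm
    obtain ⟨c, hc⟩ := h i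
    have hc0 : c ≠ 0 := by rintro rfl; simp at hc; exact hne hc
    have hdeg : g.totalDegree ≤ (pderiv i g).totalDegree := by
      rw [hc, totalDegree_mul_of_isDomain hg hc0]; omega
    obtain ⟨m', hm', hmax'⟩ := Finset.exists_mem_eq_sup (pderiv i g).support
      (support_nonempty.mpr hne) (fun m => m.degree)
    have hn' : (pderiv i g).totalDegree = m'.degree := hmax'
    have h5 := mem_support_iff.mp hm'
    rw [coeff_pderiv] at h5
    have h6 := le_totalDegree (mem_support_iff.mpr (left_ne_zero_of_mul h5))
    have h7 : (m' + Finsupp.single i 1).degree = m'.degree + 1 := by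
      simp [map_add]
    have h8 : (m' + Finsupp.single i 1).degree ≤ g.totalDegree := h6
    omega

lemma f_dvd_vdet {f : S4} {d : ℕ} (hf : f.IsHomogeneous d) (hred : Squarefree f)
    {ρ1 ρ2 ρ : Fin 4 → S4}
    (h1 : ρ1 ∈ AR4 f) (h2 : ρ2 ∈ AR4 f) (h : ρ ∈ AR4 f) : f ∣ vdet ρ1 ρ2 ρ := by
  have hf0 : f ≠ 0 := hred.ne_zero
  obtain ⟨D, g, c, hrel, hD, hfg⟩ := UniqueFactorizationMonoid.exists_reduced_factors'
    (vdet ρ1 ρ2 ρ) f hf0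
  have hg0 : g ≠ 0 := by rintro rfl; simp at hfg; exact hf0 hfg.symm
  have hc0 : c ≠ 0 := by rintro rfl; simp at hfg; exact hf0 hfg.symm
  have hdv : ∀ j, g ∣ pderiv j f := by
    intro j
    have := adj_col hf h1 h2 h j
    rw [← hD] at this
    have h3 : c * (D * pderiv j f) = c * (g * ((d : S4) * (EMat ρ1 ρ2 ρ).adjugate j 0)) := by
      rw [← mul_assoc, this, nsmul_eq_mul]
      nth_rewrite 1 [← hfg]; ring
    have h4 : g ∣ D * pderiv j f := ⟨_, mul_left_cancel₀ hc0 h3⟩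
    exact hrel.symm.dvd_of_dvd_mul_left h4
  have hrel2 : IsRelPrime c g := by
    rw [← hfg, squarefree_mul_iff] at hred; exact hred.1
  have hu : IsUnit g := by
    refine unit_of_dvd_pderiv hg0 fun j => ?_
    have h3 := hdv j
    rw [← hfg, pderiv_mul] at h3
    have h4 : g ∣ c * pderiv j g := (dvd_add_right (Dvd.intro_left _ rfl)).mp h3
    exact hrel2.symm.dvd_of_dvd_mul_left h4
  obtain ⟨u, rfl⟩ := hu
  rw [← hD, ← hfg]
  exact mul_dvd_mul_left c ((Units.isUnit u).dvd)

lemma indep {f : S4} {d e1 e2 : ℕ} {ρ1 ρ2 : Fin 4 → S4} (hf : f.IsHomogeneous d)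
    (hmin : MinimalPair f ρ1 ρ2 e1 e2) (a b : S4) (hab : a • ρ1 + b • ρ2 = 0) :
    a = 0 ∧ b = 0 := by
  obtain ⟨h1, h10, hh1, hm1, h2, hh2, hle, hn2, hm2⟩ := hmin
  obtain ⟨i0, hi0⟩ := Function.ne_iff.mp h10
  have hi0' : ρ1 i0 ≠ 0 := hi0
  by_cases hb : b = 0
  · subst hb
    refine ⟨?_, rfl⟩
    have := congrFun hab i0
    simp at this
    exact this.resolve_right hi0'
  exfalso
  obtain ⟨a', b', c, hrel, ha, hb'⟩ := UniqueFactorizationMonoid.exists_reduced_factors' a b hb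
  have hc0 : c ≠ 0 := by rintro rfl; simp at hb'; exact hb hb'.symm
  have hb0 : b' ≠ 0 := by rintro rfl; simp at hb'; exact hb hb'.symm
  have hrel2 : ∀ i, a' * ρ1 i + b' * ρ2 i = 0 := by
    intro i
    have := congrFun hab i
    simp only [Pi.add_apply, Pi.smul_apply, smul_eq_mul, Pi.zero_apply] at this
    rw [← ha, ← hb'] at this
    refine (mul_eq_zero.mp (?_ : c * (a' * ρ1 i + b' * ρ2 i) = 0)).resolve_left hc0
    linear_combination this
  have hdv : ∀ i, b' ∣ ρ1 i := by
    intro i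
    refine hrel.symm.dvd_of_dvd_mul_left (⟨-ρ2 i, ?_⟩ : b' ∣ a' * ρ1 i)
    linear_combination hrel2 i
  choose σ hσ using hdv
  have hσ1 : ρ1 = b' • σ := funext fun i => hσ i
  have hσA : σ ∈ AR4 f := AR4_of_smul hb0 (hσ1 ▸ h1)
  have hσ0 : σ i0 ≠ 0 := by
    intro h; rw [hσ, h, mul_zero] at hi0'; exact hi0' rfl
  have htd : b'.totalDegree + (σ i0).totalDegree = e1 := by
    rw [← totalDegree_mul_of_isDomain hb0 hσ0, ← hσ]
    exact (hh1 i0).totalDegree hi0'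
  have hq : ∃ q ≤ (σ i0).totalDegree, homogeneousComponent q (σ i0) ≠ 0 := by
    by_contra! hcon
    apply hσ0
    rw [← sum_homogeneousComponent (σ i0)]
    refine Finset.sum_eq_zero fun q hq => hcon q ?_
    simp only [Finset.mem_range] at hq
    omega
  obtain ⟨q, hq, hq0⟩ := hq
  have := hm1 (vcomp q σ) (vcomp_mem hf hσA q) q (fun h => hq0 (congrFun h i0)) (vcomp_homog q σ)
  have hb1 : b'.totalDegree = 0 := by omega
  have hC := totalDegree_eq_zero_iff_eq_C.mp hb1
  have hco : coeff 0 b' ≠ 0 := by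
    intro h; rw [h, C_0] at hC; exact hb0 hC
  refine hn2 (-(C (coeff 0 b')⁻¹ * a')) ?_
  funext i
  have h3 := hrel2 i
  have h4 : C (coeff 0 b')⁻¹ * b' = (1 : S4) := by
    conv_lhs => rw [hC]
    rw [coeff_C, if_pos rfl, ← C_mul, inv_mul_cancel₀ hco, C_1]
  simp only [Pi.smul_apply, smul_eq_mul]
  linear_combination C (coeff 0 b')⁻¹ * h3 - ρ2 i * h4

lemma ker_vdet {f : S4} {d e1 e2 : ℕ} {ρ1 ρ2 : Fin 4 → S4} (hd : 1 ≤ d)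
    (hf : f.IsHomogeneous d) (hf0 : f ≠ 0)
    (hmin : MinimalPair f ρ1 ρ2 e1 e2) (htame : TamePair f ρ1 ρ2) {ρ : Fin 4 → S4}
    (h : ρ ∈ AR4 f) (h0 : vdet ρ1 ρ2 ρ = 0) : ∃ a b : S4, ρ = a • ρ1 + b • ρ2 := by
  obtain ⟨h1, h10, hh1, hm1, h2, hh2, hle, hn2, hm2⟩ := hmin
  have key : ∀ q, vcomp q ρ ∈ Submodule.span S4 {ρ1, ρ2} := by
    intro q
    have hA := vcomp_mem hf h q
    have hz : vdet ρ1 ρ2 (vcomp q ρ) = 0 := by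
      rw [vdet_vcomp hh1 hh2, h0, map_zero]
    have hmv : MinorsVanish3 ρ1 ρ2 (vcomp q ρ) := by
      intro j
      have h3 := adj_col hf h1 h2 hA j
      rw [hz, zero_mul, Matrix.adjugate_fin_succ_eq_det_submatrix] at h3
      have hdf : d • f ≠ 0 := by
        rw [nsmul_eq_mul]
        refine mul_ne_zero ?_ hf0
        exact_mod_cast (by omega : d ≠ 0)
      have h4 := (mul_eq_zero.mp h3.symm).resolve_right hdf
      have h5 := (mul_eq_zero.mp h4).resolve_left (pow_ne_zero _ (by simp))
      convert h5 using 2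
      ext i k : 2
      fin_cases i <;> rfl
    obtain ⟨a, b, hab⟩ := htame _ hA q (vcomp_homog q ρ) hmv
    exact Submodule.mem_span_pair.mpr ⟨a, b, hab.symm⟩
  obtain ⟨N, hN⟩ := exists_vcomp_sum ρ
  have : ρ ∈ Submodule.span S4 {ρ1, ρ2} := by
    rw [hN]; exact Submodule.sum_mem _ fun q _ => key q
  obtain ⟨a, b, hab⟩ := Submodule.mem_span_pair.mp this
  exact ⟨a, b, hab.symm⟩

lemma vdet_left (ρ1 ρ2 : Fin 4 → S4) : vdet ρ1 ρ2 ρ1 = 0 := by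
  rw [vdet_apply]
  exact Matrix.det_zero_of_row_eq (i := 1) (j := 3) (by decide) rfl

lemma vdet_right (ρ1 ρ2 : Fin 4 → S4) : vdet ρ1 ρ2 ρ2 = 0 := by
  rw [vdet_apply]
  exact Matrix.det_zero_of_row_eq (i := 2) (j := 3) (by decide) rfl

lemma linear_forms (W : Submodule ℂ S4) (hW : W ≤ homogeneousSubmodule (Fin 4) ℂ 1) :
    ∃ φ : S4 →ₐ[ℂ] S4, (∀ p, φ p = 0 ↔ p ∈ Ideal.span (W : Set S4)) ∧
      ∀ p ∈ homogeneousSubmodule (Fin 4) ℂ 1, φ p = 0 → p ∈ W := by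
  obtain ⟨g, hg⟩ := W.mkQ.exists_rightInverse_of_surjective (by simp)
  have hg' : ∀ p, W.mkQ (g p) = p := fun p => LinearMap.congr_fun hg p
  set π : S4 →ₗ[ℂ] S4 := g ∘ₗ W.mkQ with hπ
  have hπW : ∀ w ∈ W, π w = 0 := by
    intro w hw
    have : W.mkQ w = 0 := by simpa using hw
    simp [hπ, LinearMap.comp_apply, -Submodule.mkQ_apply, this]
  have hsub : ∀ p, p - π p ∈ W := by
    intro p
    have : W.mkQ (p - π p) = 0 := by
      rw [map_sub, hπ, LinearMap.comp_apply, hg', sub_self]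
    exact (Submodule.Quotient.mk_eq_zero W).mp this
  let φ : S4 →ₐ[ℂ] S4 := aeval fun i => π (X i)
  have hφ1 : ∀ p ∈ homogeneousSubmodule (Fin 4) ℂ 1, φ p = π p := by
    intro p hp
    rw [homogeneousSubmodule_one_eq_span_X] at hp
    induction hp using Submodule.span_induction with
    | mem x hx => obtain ⟨i, rfl⟩ := hx; simp [φ]
    | zero => simp
    | add x y _ _ hx hy => rw [map_add, map_add, hx, hy]
    | smul a x _ hx => rw [map_smul, map_smul, hx]
  have hmod : ∀ p, p - φ p ∈ Ideal.span (W : Set S4) := by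
    intro p
    rw [← Ideal.Quotient.mk_eq_mk_iff_sub_mem]
    have : (Ideal.Quotient.mkₐ ℂ (Ideal.span (W : Set S4))) =
        (Ideal.Quotient.mkₐ ℂ (Ideal.span (W : Set S4))).comp φ := by
      apply MvPolynomial.algHom_ext
      intro i
      simp only [AlgHom.comp_apply, Ideal.Quotient.mkₐ_eq_mk]
      rw [Ideal.Quotient.mk_eq_mk_iff_sub_mem]
      refine Ideal.subset_span ?_
      have := hsub (X i)
      simpa [φ] using this
    exact AlgHom.congr_fun this p
  refine ⟨φ, fun p => ⟨fun h => ?_, fun h => ?_⟩, fun p hp h => ?_⟩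
  · have := hmod p
    rwa [h, sub_zero] at this
  · have : Ideal.span (W : Set S4) ≤ RingHom.ker φ := by
      rw [Ideal.span_le]
      intro w hw
      change φ w = 0
      rw [hφ1 w (hW hw), hπW w hw]
    exact this h
  · have := hsub p
    rwa [← hφ1 p hp, h, sub_zero] at this

lemma lin_rel {h3 h4 : S4} (hh3 : h3.IsHomogeneous 1) (hh4 : h4.IsHomogeneous 1) (h30 : h3 ≠ 0)
    (hn : h4 ∉ Submodule.span ℂ {h3}) (α β : S4) (h : α * h3 + β * h4 = 0) :
    ∃ c, α = c * h4 ∧ β = -(c * h3) := by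
  obtain ⟨φ, hφ, hφ1⟩ := linear_forms (Submodule.span ℂ {h3})
    (by rw [Submodule.span_singleton_le_iff_mem]; exact hh3)
  have h3z : φ h3 = 0 := (hφ h3).mpr (Ideal.subset_span (Submodule.mem_span_singleton_self h3))
  have h4z : φ h4 ≠ 0 := fun h => hn (hφ1 h4 hh4 h)
  have hb : φ β = 0 := by
    have := congrArg φ h
    rw [map_add, map_mul, map_mul, h3z, mul_zero, zero_add, map_zero] at this
    exact (mul_eq_zero.mp this).resolve_right h4z
  have hle : Ideal.span ((Submodule.span ℂ {h3} : Submodule ℂ S4) : Set S4) ≤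
      Ideal.span {h3} := by
    rw [Ideal.span_le]
    intro w hw
    obtain ⟨c, rfl⟩ := Submodule.mem_span_singleton.mp hw
    rw [smul_eq_C_mul]
    exact Ideal.mul_mem_left _ _ (Ideal.subset_span rfl)
  obtain ⟨c, hc⟩ := Ideal.mem_span_singleton.mp (hle ((hφ β).mp hb))
  refine ⟨-c, ?_, by rw [hc]; ring⟩
  apply mul_right_cancel₀ h30
  rw [hc] at h
  linear_combination h

lemma lin_prime {h3 h4 : S4} (hh3 : h3.IsHomogeneous 1) (hh4 : h4.IsHomogeneous 1) :
    ∃ φ : S4 →ₐ[ℂ] S4, φ h3 = 0 ∧ φ h4 = 0 ∧ ∀ p, φ p = 0 → ∃ u v, p = u * h3 + v * h4 := by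
  obtain ⟨φ, hφ, hφ1⟩ := linear_forms (Submodule.span ℂ {h3, h4})
    (by
      rw [Submodule.span_le]
      rintro x (rfl | rfl)
      · exact hh3
      · exact hh4)
  refine ⟨φ, (hφ _).mpr (Ideal.subset_span (Submodule.subset_span (by simp))),
    (hφ _).mpr (Ideal.subset_span (Submodule.subset_span (by simp))), fun p hp => ?_⟩
  have hle : Ideal.span ((Submodule.span ℂ {h3, h4} : Submodule ℂ S4) : Set S4) ≤
      Ideal.span {h3, h4} := by
    rw [Ideal.span_le]
    intro w hw
    obtain ⟨c, e, rfl⟩ := Submodule.mem_span_pair.mp hw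
    rw [smul_eq_C_mul, smul_eq_C_mul]
    exact Ideal.mem_span_pair.mpr ⟨_, _, rfl⟩
  obtain ⟨u, v, huv⟩ := Ideal.mem_span_pair.mp (hle ((hφ p).mp hp))
  exact ⟨u, v, huv.symm⟩

lemma backward {f : S4} {d e1 e2 e3 : ℕ} {ρ1 ρ2 : Fin 4 → S4}
    (hd : 1 ≤ d) (hf : f.IsHomogeneous d) (hred : Squarefree f)
    (hmin : MinimalPair f ρ1 ρ2 e1 e2) (htame : TamePair f ρ1 ρ2)
    (he3 : e1 + e2 + e3 + 1 = d) {h3 h4 : S4} {ρ3 ρ4 : Fin 4 → S4}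
    (hh3 : h3.IsHomogeneous 1) (hh4 : h4.IsHomogeneous 1) (h30 : h3 ≠ 0)
    (hn : h4 ∉ Submodule.span ℂ {h3}) (hA3 : ρ3 ∈ AR4 f) (hA4 : ρ4 ∈ AR4 f)
    (hρ3 : VecHomog ρ3 (e3 + 1)) (hρ4 : VecHomog ρ4 (e3 + 1))
    (hv3 : vdet ρ1 ρ2 ρ3 = h3 * f) (hv4 : vdet ρ1 ρ2 ρ4 = h4 * f)
    (no1 : ∀ σ ∈ AR4 f, vdet ρ1 ρ2 σ ≠ f) : IsNearlyFreeWith f d e1 e2 (e3 + 1) := by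
  have hf0 : f ≠ 0 := hred.ne_zero
  have hind := indep hf hmin
  have hker : ∀ ρ ∈ AR4 f, vdet ρ1 ρ2 ρ = 0 → ∃ a b : S4, ρ = a • ρ1 + b • ρ2 :=
    fun ρ h h0 => ker_vdet hd hf hf0 hmin htame h h0
  obtain ⟨h1, h10, hh1, hm1, h2, hh2, hle, hn2, hm2⟩ := hmin
  have hle3 : e2 ≤ e3 + 1 := by
    refine hm2 ρ3 hA3 _ hρ3 fun a ha => ?_
    rw [ha, map_smul, vdet_left, smul_zero] at hv3
    exact mul_ne_zero h30 hf0 hv3.symm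
  obtain ⟨a0, b0, hab0⟩ := hker (h4 • ρ3 - h3 • ρ4)
    (Submodule.sub_mem _ (Submodule.smul_mem _ _ hA3) (Submodule.smul_mem _ _ hA4)) (by
      rw [map_sub, map_smul, map_smul, hv3, hv4]; simp only [smul_eq_mul]; ring)
  have hab0' : ∀ i, h4 * ρ3 i - h3 * ρ4 i = a0 * ρ1 i + b0 * ρ2 i := fun i => congrFun hab0 i
  obtain ⟨φ, hφ3, hφ4, hφ⟩ := lin_prime hh3 hh4
  have gen : ∀ σ ∈ AR4 f, ∃ a b u v : S4, σ = a • ρ1 + b • ρ2 + u • ρ3 + v • ρ4 := by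
    intro σ hσ
    obtain ⟨h, hh⟩ := f_dvd_vdet hf hred h1 h2 hσ
    have hI : φ h = 0 := by
      by_contra hne
      obtain ⟨a1, b1, hab1⟩ := hker (h • ρ3 - h3 • σ)
        (Submodule.sub_mem _ (Submodule.smul_mem _ _ hA3) (Submodule.smul_mem _ _ hσ)) (by
          rw [map_sub, map_smul, map_smul, hv3, hh]; simp only [smul_eq_mul]; ring)
      obtain ⟨a2, b2, hab2⟩ := hker (h • ρ4 - h4 • σ)
        (Submodule.sub_mem _ (Submodule.smul_mem _ _ hA4) (Submodule.smul_mem _ _ hσ)) (by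
          rw [map_sub, map_smul, map_smul, hv4, hh]; simp only [smul_eq_mul]; ring)
      have hK := hind (h * a0 - h4 * a1 + h3 * a2) (h * b0 - h4 * b1 + h3 * b2) (by
        funext i
        have e0 := hab0' i
        have e1 := congrFun hab1 i
        have e2 := congrFun hab2 i
        simp only [Pi.add_apply, Pi.sub_apply, Pi.smul_apply, smul_eq_mul, Pi.zero_apply] at *
        linear_combination -h * e0 + h4 * e1 - h3 * e2)
      have ha0 : φ a0 = 0 := by
        have := congrArg φ hK.1
        simp only [map_add, map_sub, map_mul, hφ3, hφ4, zero_mul, sub_zero, add_zero,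
          map_zero] at this
        exact (mul_eq_zero.mp this).resolve_left hne
      have hb0 : φ b0 = 0 := by
        have := congrArg φ hK.2
        simp only [map_add, map_sub, map_mul, hφ3, hφ4, zero_mul, sub_zero, add_zero,
          map_zero] at this
        exact (mul_eq_zero.mp this).resolve_left hne
      obtain ⟨u, v, huv⟩ := hφ a0 ha0
      obtain ⟨u', v', huv'⟩ := hφ b0 hb0
      have hdiv : ∀ i, ∃ c, ρ3 i - v * ρ1 i - v' * ρ2 i = h3 * c := by
        intro i
        obtain ⟨c, -, hc⟩ := lin_rel hh3 hh4 h30 hn (-(ρ4 i + u * ρ1 i + u' * ρ2 i))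
          (ρ3 i - v * ρ1 i - v' * ρ2 i) (by
            have := hab0' i
            rw [huv, huv'] at this
            linear_combination this)
        exact ⟨-c, by rw [hc]; ring⟩
      choose τ hτ using hdiv
      have hτ' : h3 • τ = ρ3 - v • ρ1 - v' • ρ2 := funext fun i => (hτ i).symm
      have hτA : τ ∈ AR4 f := by
        apply AR4_of_smul h30
        rw [hτ']
        exact Submodule.sub_mem _ (Submodule.sub_mem _ hA3 (Submodule.smul_mem _ _ h1))
          (Submodule.smul_mem _ _ h2)
      refine no1 τ hτA ?_
      apply mul_left_cancel₀ h30
      rw [← smul_eq_mul, ← map_smul, hτ', map_sub, map_sub, map_smul, map_smul, vdet_left,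
        vdet_right, hv3]
      simp
    obtain ⟨u, v, huv⟩ := hφ h hI
    obtain ⟨a, b, hab⟩ := hker (σ - u • ρ3 - v • ρ4)
      (Submodule.sub_mem _ (Submodule.sub_mem _ hσ (Submodule.smul_mem _ _ hA3))
          (Submodule.smul_mem _ _ hA4)) (by
        rw [map_sub, map_sub, map_smul, map_smul, hv3, hv4, hh, huv]
        simp only [smul_eq_mul]; ring)
    exact ⟨a, b, u, v, by rw [← hab]; abel⟩
  -- homogeneous relation
  obtain ⟨A, B, hA, hB, hAB⟩ : ∃ A B : S4, A.IsHomogeneous (e3 + 1 - e1 + 1) ∧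
      B.IsHomogeneous (e3 + 1 - e2 + 1) ∧
      ∀ i, h4 * ρ3 i - h3 * ρ4 i = A * ρ1 i + B * ρ2 i := by
    refine ⟨_, _, homogeneousComponent_isHomogeneous (e3 + 1 - e1 + 1) a0,
      homogeneousComponent_isHomogeneous (e3 + 1 - e2 + 1) b0, fun i => ?_⟩
    have h := congrArg (homogeneousComponent (e3 + 2)) (hab0' i)
    have hl : (h4 * ρ3 i - h3 * ρ4 i).IsHomogeneous (e3 + 2) := by
      have := (hh4.mul (hρ3 i)).sub (hh3.mul (hρ4 i))
      rwa [show 1 + (e3 + 1) = e3 + 2 by omega] at this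
    rw [homogeneousComponent_eq_self hl, map_add] at h
    rw [h]
    congr 1
    · rw [← hc_mul_s16 _ _ _ _ (hh1 i)]; congr 2; omega
    · rw [← hc_mul_s16 _ _ _ _ (hh2 i)]; congr 2; omega
  refine ⟨hle, hle3, by omega, ![ρ1, ρ2, ρ3, ρ4], ![-A, -B, h4, -h3], ?_, hh1, hh2, hρ3, hρ4,
    ?_, hA.neg, hB.neg, hh4, hh3.neg, ?_, ?_, ?_⟩
  · intro i
    fin_cases i
    exacts [h1, h2, hA3, hA4]
  · intro σ hσ
    obtain ⟨a, b, u, v, h⟩ := gen σ hσ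
    refine ⟨![a, b, u, v], ?_⟩
    rw [Fin.sum_univ_four]
    exact h
  · intro h
    have := congrFun h 3
    exact h30 (neg_eq_zero.mp this)
  · rw [Fin.sum_univ_four]
    funext i
    change -A * ρ1 i + -B * ρ2 i + h4 * ρ3 i + -h3 * ρ4 i = 0
    linear_combination hAB i
  · intro b hb
    rw [Fin.sum_univ_four] at hb
    have hb' : b 0 • ρ1 + b 1 • ρ2 + b 2 • ρ3 + b 3 • ρ4 = 0 := hb
    have hv := congrArg (vdet ρ1 ρ2) hb'
    simp only [map_add, map_smul, vdet_left, vdet_right, hv3, hv4, map_zero, smul_eq_mul] at hv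
    obtain ⟨c, hc2, hc3⟩ := lin_rel hh3 hh4 h30 hn (b 2) (b 3) (by
      apply mul_right_cancel₀ hf0
      linear_combination hv)
    obtain ⟨hx, hy⟩ := hind (b 0 + c * A) (b 1 + c * B) (by
      funext i
      have e0 := congrFun hb' i
      simp only [Pi.add_apply, Pi.smul_apply, smul_eq_mul, Pi.zero_apply] at e0 ⊢
      rw [hc2, hc3] at e0
      linear_combination e0 - c * hAB i)
    refine ⟨c, funext fun i => ?_⟩
    fin_cases i
    · change b 0 = c * -A
      linear_combination hx
    · change b 1 = c * -B
      linear_combination hy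
    · exact hc2
    · change b 3 = c * -h3
      linear_combination hc3

lemma mem_Bf1 {f : S4} {ρ1 ρ2 : Fin 4 → S4} {h : S4} : h ∈ Bf1 f ρ1 ρ2 ↔
    h.IsHomogeneous 1 ∧ ∃ ρ ∈ AR4 f, vdet ρ1 ρ2 ρ = h * f := Iff.rfl

lemma Bf1_lift {f : S4} {d e1 e2 e3 : ℕ} {ρ1 ρ2 : Fin 4 → S4} (hf : f.IsHomogeneous d)
    (h1 : VecHomog ρ1 e1) (h2 : VecHomog ρ2 e2)
    (he3 : e1 + e2 + e3 + 1 = d) {h : S4} (hh : h ∈ Bf1 f ρ1 ρ2) :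
    ∃ ρ ∈ AR4 f, VecHomog ρ (e3 + 1) ∧ vdet ρ1 ρ2 ρ = h * f := by
  obtain ⟨hh1, ρ, hρ, hv⟩ := mem_Bf1.mp hh
  refine ⟨vcomp (e3 + 1) ρ, vcomp_mem hf hρ _, vcomp_homog _ _, ?_⟩
  rw [vdet_vcomp h1 h2, hv]
  apply homogeneousComponent_eq_self
  convert hh1.mul hf using 1
  omega

/-- `(a, b) ↦ a r + b s` -/
def Lmap (r s : Fin 4 → S4) : (S4 × S4) →ₗ[ℂ] (Fin 4 → S4) where
  toFun p := p.1 • r + p.2 • s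
  map_add' p q := by simp only [Prod.fst_add, Prod.snd_add, add_smul]; abel
  map_smul' c p := by simp [smul_assoc]

lemma forward {f : S4} {d e1 e2 e3 : ℕ} {ρ1 ρ2 : Fin 4 → S4}
    (hd : 1 ≤ d) (hf : f.IsHomogeneous d) (hred : Squarefree f)
    (hmin : MinimalPair f ρ1 ρ2 e1 e2) (htame : TamePair f ρ1 ρ2)
    (he3 : e1 + e2 + e3 + 1 = d) (hnf : IsNearlyFreeWith f d e1 e2 (e3 + 1)) :
    Module.finrank ℂ (Bf1 f ρ1 ρ2) = 2 := by
  have hf0 : f ≠ 0 := hred.ne_zero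
  have hind := indep hf hmin
  have hker : ∀ ρ ∈ AR4 f, vdet ρ1 ρ2 ρ = 0 → ∃ a b : S4, ρ = a • ρ1 + b • ρ2 :=
    fun ρ h h0 => ker_vdet hd hf hf0 hmin htame h h0
  obtain ⟨h1, h10, hh1, hm1, h2, hh2, hle, hn2, hm2⟩ := hmin
  obtain ⟨-, hle2, -, σ, a, hσA, hσ0, hσ1, hσ2, hσ3, hgen, ha0, ha1, ha2, ha3, hane, hrel,
    huniq⟩ := hnf
  have hfin : ∀ k, Module.Finite ℂ (homogeneousSubmodule (Fin 4) ℂ k) :=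
    fun k => Module.Finite.iff_fg.mpr (homogeneousSubmodule_fg _ _ k)
  have := hfin (e3 + 1 - e1)
  have := hfin (e3 + 1 - e2)
  have comp_eq : ∀ (p g : S4) (e : ℕ), e ≤ e3 + 1 → g.IsHomogeneous e →
      homogeneousComponent (e3 + 1) (p * g) = homogeneousComponent (e3 + 1 - e) p * g := by
    intro p g e he hg
    rw [← hc_mul_s16 _ _ _ _ hg]; congr 2; omega
  let ι : (homogeneousSubmodule (Fin 4) ℂ (e3 + 1 - e1) ×
      homogeneousSubmodule (Fin 4) ℂ (e3 + 1 - e2)) →ₗ[ℂ] S4 × S4 :=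
    LinearMap.prodMap (Submodule.subtype _) (Submodule.subtype _)
  let T0 := Lmap ρ1 ρ2 ∘ₗ ι
  let T := (Lmap (σ 0) (σ 1) ∘ₗ ι).coprod
    ((LinearMap.toSpanSingleton ℂ _ (σ 2)).coprod (LinearMap.toSpanSingleton ℂ _ (σ 3)))
  have T0_apply : ∀ p, T0 p = (p.1 : S4) • ρ1 + (p.2 : S4) • ρ2 := fun p => rfl
  have T_apply : ∀ p q, T (p, q) =
      ∑ i, (![(p.1 : S4), (p.2 : S4), C q.1, C q.2] : Fin 4 → S4) i • σ i := by
    intro p q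
    rw [Fin.sum_univ_four]
    funext i
    change ((p.1 : S4) * σ 0 i + (p.2 : S4) * σ 1 i) + (q.1 • σ 2 i + q.2 • σ 3 i) =
      (p.1 : S4) * σ 0 i + (p.2 : S4) * σ 1 i + C q.1 * σ 2 i + C q.2 * σ 3 i
    rw [smul_eq_C_mul, smul_eq_C_mul]; ring
  have T0_inj : Function.Injective T0 := by
    rw [← LinearMap.ker_eq_bot, LinearMap.ker_eq_bot']
    intro p hp
    rw [T0_apply] at hp
    obtain ⟨hx, hy⟩ := hind _ _ hp
    exact Prod.ext (Subtype.ext hx) (Subtype.ext hy)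
  have T_inj : Function.Injective T := by
    rw [← LinearMap.ker_eq_bot, LinearMap.ker_eq_bot']
    rintro ⟨p, q⟩ hp
    rw [T_apply] at hp
    obtain ⟨c, hc⟩ := huniq _ hp
    have hz : ∀ (k : ℕ) (b x : S4), b.IsHomogeneous k → x.IsHomogeneous (k + 1) → b = c * x →
        b = 0 := by
      intro k b x hb hx hbx
      by_contra hb0
      have hc0 : c ≠ 0 := by rintro rfl; simp at hbx; exact hb0 hbx
      have hx0 : x ≠ 0 := by rintro rfl; simp at hbx; exact hb0 hbx
      have e1 := hb.totalDegree hb0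
      rw [hbx, totalDegree_mul_of_isDomain hc0 hx0, hx.totalDegree hx0] at e1
      omega
    have z0 : (p.1 : S4) = 0 := hz _ _ _ p.1.2 ha0 (congrFun hc 0)
    have z1 : (p.2 : S4) = 0 := hz _ _ _ p.2.2 ha1 (congrFun hc 1)
    have z2 : (C q.1 : S4) = 0 := hz 0 _ _ (isHomogeneous_C _ _) ha2 (congrFun hc 2)
    have z3 : (C q.2 : S4) = 0 := hz 0 _ _ (isHomogeneous_C _ _) ha3 (congrFun hc 3)
    exact Prod.ext (Prod.ext (Subtype.ext z0) (Subtype.ext z1))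
      (Prod.ext (by simpa using z2) (by simpa using z3))
  have mem_gr : ∀ ρ, ρ ∈ ARgr f (e3 + 1) ↔ ρ ∈ AR4 f ∧ VecHomog ρ (e3 + 1) := by
    intro ρ
    simp only [ARgr, Submodule.mem_inf, Submodule.restrictScalars_mem, Submodule.mem_pi]
    exact and_congr_right fun _ => ⟨fun h i => h i (Set.mem_univ i), fun h i _ => h i⟩
  have hmul : ∀ (k e : ℕ) (p g : S4), e ≤ e3 + 1 → k = e3 + 1 - e → p.IsHomogeneous k →
      g.IsHomogeneous e → (p * g).IsHomogeneous (e3 + 1) := by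
    intro k e p g he hk hp hg
    have := hp.mul hg
    convert this using 1; omega
  have T_range : LinearMap.range T = ARgr f (e3 + 1) := by
    ext ρ
    rw [mem_gr]
    constructor
    · rintro ⟨⟨p, q⟩, rfl⟩
      rw [T_apply]
      refine ⟨Submodule.sum_mem _ fun i _ => Submodule.smul_mem _ _ (hσA i), fun i => ?_⟩
      rw [Fin.sum_univ_four]
      refine ((IsHomogeneous.add ?_ ?_).add ?_).add ?_
      · exact hmul _ _ _ _ (by omega) rfl p.1.2 (hσ0 i)
      · exact hmul _ _ _ _ (by omega) rfl p.2.2 (hσ1 i)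
      · exact hmul 0 _ _ _ le_rfl (by simp) (isHomogeneous_C _ _) (hσ2 i)
      · exact hmul 0 _ _ _ le_rfl (by simp) (isHomogeneous_C _ _) (hσ3 i)
    · rintro ⟨hρ, hh⟩
      obtain ⟨b, hb⟩ := hgen ρ hρ
      refine ⟨((⟨homogeneousComponent (e3 + 1 - e1) (b 0), homogeneousComponent_mem _ _⟩,
        ⟨homogeneousComponent (e3 + 1 - e2) (b 1), homogeneousComponent_mem _ _⟩),
        (coeff 0 (b 2), coeff 0 (b 3))), ?_⟩
      rw [T_apply]
      funext i
      rw [← homogeneousComponent_eq_self (hh i), hb, Fin.sum_univ_four, Fin.sum_univ_four]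
      simp only [Pi.add_apply, Pi.smul_apply, smul_eq_mul, map_add]
      rw [comp_eq _ _ _ (by omega) (hσ0 i), comp_eq _ _ _ (by omega) (hσ1 i),
        comp_eq _ _ _ le_rfl (hσ2 i), comp_eq _ _ _ le_rfl (hσ3 i), Nat.sub_self,
        homogeneousComponent_zero, homogeneousComponent_zero]
      rfl
  have hfinAR : Module.Finite ℂ (ARgr f (e3 + 1)) := by
    rw [← T_range]; infer_instance
  let v0 : ARgr f (e3 + 1) →ₗ[ℂ] S4 := ((vdet ρ1 ρ2).restrictScalars ℂ) ∘ₗ Submodule.subtype _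
  have v0_apply : ∀ x, v0 x = vdet ρ1 ρ2 x := fun x => rfl
  have hkerv : (LinearMap.ker v0).map (Submodule.subtype _) = LinearMap.range T0 := by
    ext ρ
    constructor
    · rintro ⟨⟨x, hx⟩, hx0, rfl⟩
      have hx0' : vdet ρ1 ρ2 x = 0 := hx0
      obtain ⟨hxA, hxh⟩ := (mem_gr x).mp hx
      obtain ⟨p, q, hpq⟩ := hker x hxA hx0'
      refine ⟨(⟨homogeneousComponent (e3 + 1 - e1) p, homogeneousComponent_mem _ _⟩,
        ⟨homogeneousComponent (e3 + 1 - e2) q, homogeneousComponent_mem _ _⟩), ?_⟩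
      rw [T0_apply]
      funext i
      change _ = x i
      rw [← homogeneousComponent_eq_self (hxh i), hpq]
      simp only [Pi.add_apply, Pi.smul_apply, smul_eq_mul, map_add]
      rw [comp_eq _ _ _ (by omega) (hh1 i), comp_eq _ _ _ (by omega) (hh2 i)]
    · rintro ⟨p, rfl⟩
      rw [T0_apply]
      refine ⟨⟨(p.1 : S4) • ρ1 + (p.2 : S4) • ρ2, (mem_gr _).mpr ⟨?_, fun i => ?_⟩⟩, ?_, rfl⟩
      · exact Submodule.add_mem _ (Submodule.smul_mem _ _ h1) (Submodule.smul_mem _ _ h2)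
      · refine IsHomogeneous.add ?_ ?_
        · exact hmul _ _ _ _ (by omega) rfl p.1.2 (hh1 i)
        · exact hmul _ _ _ _ (by omega) rfl p.2.2 (hh2 i)
      · change vdet ρ1 ρ2 ((p.1 : S4) • ρ1 + (p.2 : S4) • ρ2) = 0
        rw [map_add, map_smul, map_smul, vdet_left, vdet_right]; simp
  have hrangev : LinearMap.range v0 = (Bf1 f ρ1 ρ2).map (LinearMap.mulRight ℂ f) := by
    ext y
    constructor
    · rintro ⟨⟨x, hx⟩, rfl⟩
      obtain ⟨hxA, hxh⟩ := (mem_gr x).mp hx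
      obtain ⟨h, hh⟩ := f_dvd_vdet hf hred h1 h2 hxA
      refine ⟨homogeneousComponent 1 h, mem_Bf1.mpr
        ⟨homogeneousComponent_isHomogeneous _ _, x, hxA, ?_⟩, ?_⟩
      all_goals
        have hv := vdet_homog hh1 hh2 hxh
        rw [show e3 + 1 + (e1 + e2 + 1) = 1 + d by omega] at hv
        have := homogeneousComponent_eq_self hv
        rw [hh, mul_comm f h, hc_mul_s16 _ _ _ _ hf] at this
      · rw [hh, mul_comm f h, this]
      · change homogeneousComponent 1 h * f = vdet ρ1 ρ2 x
        rw [hh, this, mul_comm]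
    · rintro ⟨h, hh, rfl⟩
      obtain ⟨ρ, hρ, hρh, hv⟩ := Bf1_lift hf hh1 hh2 he3 hh
      exact ⟨⟨ρ, (mem_gr ρ).mpr ⟨hρ, hρh⟩⟩, hv⟩
  have hmi : Function.Injective (LinearMap.mulRight ℂ f) := fun x y h =>
    mul_right_cancel₀ hf0 h
  have r1 := LinearMap.finrank_range_add_finrank_ker v0
  have r2 : Module.finrank ℂ (LinearMap.range v0) = Module.finrank ℂ (Bf1 f ρ1 ρ2) := by
    rw [hrangev]
    exact (Submodule.equivMapOfInjective _ hmi _).finrank_eq.symm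
  have r3 : Module.finrank ℂ (LinearMap.ker v0) = Module.finrank ℂ (LinearMap.range T0) := by
    rw [← hkerv]
    exact (Submodule.equivMapOfInjective _ (Submodule.subtype_injective _) _).finrank_eq
  have r4 := LinearMap.finrank_range_of_inj T0_inj
  have r5 := LinearMap.finrank_range_of_inj T_inj
  rw [T_range, Module.finrank_prod] at r5
  have r6 : Module.finrank ℂ (ℂ × ℂ) = 2 := by simp
  omega

/-- **Proposition 5.1.** A tame surface `D : f = 0` is nearly free with exponents
`e1, e2, e3 + 1` if and only if the degree-one part of the Bourbaki ideal `B(f)` is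
two-dimensional. -/
theorem prop_5_1 (f : S4) (d e1 e2 e3 : ℕ) (ρ1 ρ2 : Fin 4 → S4)
    (hd : 1 ≤ d) (hf : f.IsHomogeneous d) (hred : Squarefree f)
    (hmin : MinimalPair f ρ1 ρ2 e1 e2) (htame : TamePair f ρ1 ρ2)
    (he3 : e1 + e2 + e3 + 1 = d) :
    IsNearlyFreeWith f d e1 e2 (e3 + 1) ↔ Module.finrank ℂ (Bf1 f ρ1 ρ2) = 2 := by
  constructor
  · exact fun h => forward hd hf hred hmin htame he3 h
  · intro hfr
    have hf0 : f ≠ 0 := hred.ne_zero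
    have hfin : Module.Finite ℂ (Bf1 f ρ1 ρ2) :=
      Module.finite_of_finrank_pos (by omega)
    have hh1 := hmin.2.2.1
    have hh2 := hmin.2.2.2.2.2.1
    let b := Module.finBasisOfFinrankEq ℂ (Bf1 f ρ1 ρ2) hfr
    obtain ⟨ρ3, hA3, hρ3, hv3⟩ := Bf1_lift hf hh1 hh2 he3 (b 0).2
    obtain ⟨ρ4, hA4, hρ4, hv4⟩ := Bf1_lift hf hh1 hh2 he3 (b 1).2
    refine backward hd hf hred hmin htame he3 (h3 := b 0) (h4 := b 1) (b 0).2.1 (b 1).2.1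
      ?_ ?_ hA3 hA4 hρ3 hρ4 hv3 hv4 ?_
    · intro h
      exact b.ne_zero 0 (Subtype.ext h)
    · intro h
      obtain ⟨c, hc⟩ := Submodule.mem_span_singleton.mp h
      have h1 : c • b 0 = b 1 := Subtype.ext hc
      have h2 := congrArg (fun x => b.repr x 1) h1
      simp at h2
    · intro σ hσ hv
      have hX : ∀ i : Fin 4, (X i : S4) ∈ Bf1 f ρ1 ρ2 := fun i =>
        mem_Bf1.mpr ⟨isHomogeneous_X _ _, (X i : S4) • σ, Submodule.smul_mem _ _ hσ, by
          rw [map_smul, hv, smul_eq_mul]⟩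
      have hli : LinearIndependent ℂ (fun i : Fin 4 => (⟨X i, hX i⟩ : Bf1 f ρ1 ρ2)) := by
        apply LinearIndependent.of_comp (Bf1 f ρ1 ρ2).subtype
        exact linearIndependent_X (Fin 4) ℂ
      have := hli.fintype_card_le_finrank
      rw [hfr] at this
      simp at this
end
end
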